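/- Let κ be a cardinal number. There exist a lattice L and a maximal congruence μ of L such that the quotient L/μ has cardinality κ if and only if κ = 2 or κ ≥ 5. -/

import Mathlib

/-- A lattice congruence: an equivalence relation compatible with `⊔` and `⊓`. -/
def IsLatCon {L : Type*} [Lattice L] (θ : L → L → Prop) : Prop :=
  Equivalence θ ∧ (∀ a b c d, θ a b → θ c d → θ (a ⊔ c) (b ⊔ d)) ∧
    (∀ a b c d, θ a b → θ c d → θ (a ⊓ c) (b ⊓ d))

/-- A maximal congruence: a maximal element of the proper congruences under inclusion. -/
def IsMaxCon {L : Type*} [Lattice L] (θ : L → L → Prop) : Prop :=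
  IsLatCon θ ∧ θ ≠ (fun _ _ => True) ∧
    ∀ φ : L → L → Prop, IsLatCon φ → (∀ a b, θ a b → φ a b) →
      φ = θ ∨ φ = (fun _ _ => True)

/-- A prime congruence: proper, and `α ∩ β ⊆ θ` implies `α ⊆ θ` or `β ⊆ θ`. -/
def IsPrimeCon {L : Type*} [Lattice L] (θ : L → L → Prop) : Prop :=
  IsLatCon θ ∧ θ ≠ (fun _ _ => True) ∧
    ∀ α β : L → L → Prop, IsLatCon α → IsLatCon β →
      (∀ a b, α a b → β a b → θ a b) →
      (∀ a b, α a b → θ a b) ∨ (∀ a b, β a b → θ a b)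

universe u

/-!
The quotient of a lattice by a maximal congruence is simple, and a simple lattice is its own
quotient by the maximal congruence `=`, so the question is which cardinals are those of simple
lattices.

In a distributive lattice each map `x ↦ x ⊔ a` is a homomorphism. Simplicity makes it injective or
constant, so that `a` is least or greatest, and the lattice has two elements. If instead
distributivity fails at `x, y, z`, then `x, y, z, y ⊓ z, y ⊔ z` are five different elements.

Conversely, `#A` pairwise complementary elements together with `⊥` and `⊤` form a lattice with
`#A + 2` elements. For pairwise complementary `a, b, c`, a congruence with `⊥ ~ a` has `b ~ ⊤`,
hence `⊥ ~ c`, hence `a ~ ⊤`, and so `⊥ ~ ⊤`: the lattice is simple if `#A = 0` or `3 ≤ #A`.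
-/

open Cardinal Function

/-- A simple lattice: a lattice with exactly two congruences, equality and the total relation. -/
def IsSimpleLat (L : Type*) [Lattice L] : Prop :=
  Nontrivial L ∧ ∀ θ : L → L → Prop, IsLatCon θ → θ = (· = ·) ∨ θ = fun _ _ => True

section Congruence

variable {L M : Type*} [Lattice L] [Lattice M]

theorem isLatCon_eq : IsLatCon (fun a b : L => a = b) :=
  ⟨eq_equivalence, fun _ _ _ _ hab hcd => congrArg₂ _ hab hcd,
    fun _ _ _ _ hab hcd => congrArg₂ _ hab hcd⟩

namespace IsLatCon

variable {θ : L → L → Prop} {a b c : L}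

theorem sup_right (hθ : IsLatCon θ) (h : θ a b) (c : L) : θ (a ⊔ c) (b ⊔ c) :=
  hθ.2.1 _ _ _ _ h (hθ.1.refl c)

theorem inf_right (hθ : IsLatCon θ) (h : θ a b) (c : L) : θ (a ⊓ c) (b ⊓ c) :=
  hθ.2.2 _ _ _ _ h (hθ.1.refl c)

theorem inf_sup (hθ : IsLatCon θ) (h : θ a b) : θ (a ⊓ b) (a ⊔ b) := by
  have hinf : θ (a ⊓ b) b := by simpa only [inf_idem] using hθ.inf_right h b
  have hsup : θ (a ⊔ b) b := by simpa only [sup_idem] using hθ.sup_right h b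
  exact hθ.1.trans hinf (hθ.1.symm hsup)

theorem comap {θ : M → M → Prop} (hθ : IsLatCon θ) (f : LatticeHom L M) :
    IsLatCon fun a b => θ (f a) (f b) := by
  refine ⟨hθ.1.comap f, fun a b c d hab hcd => ?_, fun a b c d hab hcd => ?_⟩
  · simpa only [map_sup] using hθ.2.1 _ _ _ _ hab hcd
  · simpa only [map_inf] using hθ.2.2 _ _ _ _ hab hcd

theorem quot_mk_eq_iff (hθ : IsLatCon θ) : Quot.mk θ a = Quot.mk θ b ↔ θ a b := by
  rw [Quot.eq, hθ.1.eqvGen_iff]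

/-- The quotient lattice `L / θ`, with operations induced from `L`. -/
abbrev quotLattice (hθ : IsLatCon θ) : Lattice (Quot θ) :=
  letI : Max (Quot θ) := ⟨Quot.map₂ (· ⊔ ·)
    (fun a _ _ h => hθ.2.1 _ _ _ _ (hθ.1.refl a) h) (fun _ _ c h => hθ.sup_right h c)⟩
  letI : Min (Quot θ) := ⟨Quot.map₂ (· ⊓ ·)
    (fun a _ _ h => hθ.2.2 _ _ _ _ (hθ.1.refl a) h) (fun _ _ c h => hθ.inf_right h c)⟩
  Lattice.mk'
    (by rintro ⟨a⟩ ⟨b⟩; exact congrArg (Quot.mk θ) (sup_comm a b))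
    (by rintro ⟨a⟩ ⟨b⟩ ⟨c⟩; exact congrArg (Quot.mk θ) (sup_assoc a b c))
    (by rintro ⟨a⟩ ⟨b⟩; exact congrArg (Quot.mk θ) (inf_comm a b))
    (by rintro ⟨a⟩ ⟨b⟩ ⟨c⟩; exact congrArg (Quot.mk θ) (inf_assoc a b c))
    (by rintro ⟨a⟩ ⟨b⟩; exact congrArg (Quot.mk θ) sup_inf_self)
    (by rintro ⟨a⟩ ⟨b⟩; exact congrArg (Quot.mk θ) inf_sup_self)

/-- The canonical projection of `L` onto the quotient lattice `L / θ`. -/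
def quotHom (hθ : IsLatCon θ) : @LatticeHom L (Quot θ) _ hθ.quotLattice :=
  letI := hθ.quotLattice
  { toFun := Quot.mk θ, map_sup' := fun _ _ => rfl, map_inf' := fun _ _ => rfl }

section BoundedOrder

variable [BoundedOrder L]

theorem eq_true_of_bot_top (hθ : IsLatCon θ) (h : θ ⊥ ⊤) : θ = fun _ _ => True := by
  have rel_bot (a : L) : θ ⊥ a := by
    simpa only [bot_inf_eq, top_inf_eq] using hθ.inf_right h a
  funext a b
  exact eq_true (hθ.1.trans (hθ.1.symm (rel_bot a)) (rel_bot b))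

theorem top_of_bot_of_isCompl (hθ : IsLatCon θ) (hab : IsCompl a b) (h : θ ⊥ a) : θ b ⊤ := by
  simpa only [bot_sup_eq, hab.sup_eq_top] using hθ.sup_right h b

theorem bot_of_top_of_isCompl (hθ : IsLatCon θ) (hab : IsCompl a b) (h : θ a ⊤) : θ ⊥ b := by
  have hb : θ ⊥ (⊤ ⊓ b) := hab.inf_eq_bot ▸ hθ.inf_right h b
  rwa [top_inf_eq] at hb

theorem bot_top_of_isCompl (hθ : IsLatCon θ) (hab : IsCompl a b) (hbc : IsCompl b c)
    (hca : IsCompl c a) (h : θ ⊥ a) : θ ⊥ ⊤ := by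
  have hb : θ b ⊤ := hθ.top_of_bot_of_isCompl hab h
  have hc : θ ⊥ c := hθ.bot_of_top_of_isCompl hbc hb
  have ha : θ a ⊤ := hθ.top_of_bot_of_isCompl hca hc
  exact hθ.1.trans h ha

end BoundedOrder

end IsLatCon

theorem IsSimpleLat.isMaxCon_eq (hL : IsSimpleLat L) : IsMaxCon (fun a b : L => a = b) := by
  obtain ⟨⟨a, b, hab⟩, hsimple⟩ := hL
  exact ⟨isLatCon_eq, fun h => hab (of_eq_true (congrFun₂ h a b)), fun θ hθ _ => hsimple θ hθ⟩

theorem IsMaxCon.isSimpleLat_of_surjective {f : LatticeHom L M} (hf : Surjective f)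
    (hker : IsMaxCon fun a b => f a = f b) : IsSimpleLat M := by
  obtain ⟨-, hproper, hmax⟩ := hker
  refine ⟨?_, fun θ hθ => ?_⟩
  · by_contra hM
    rw [not_nontrivial_iff_subsingleton] at hM
    exact hproper (funext₂ fun _ _ => eq_true (Subsingleton.elim _ _))
  · have hker_le (a b : L) (h : f a = f b) : θ (f a) (f b) := h ▸ hθ.1.refl (f a)
    refine (hmax _ (hθ.comap f) hker_le).imp (fun h => ?_) (fun h => ?_) <;>
      exact funext₂ (hf.forall₂.2 (congrFun₂ h))

theorem IsMaxCon.isSimpleLat_quot {μ : L → L → Prop} (hμ : IsMaxCon μ) :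
    @IsSimpleLat (Quot μ) hμ.1.quotLattice := by
  let _ := hμ.1.quotLattice
  have hker : (fun a b => hμ.1.quotHom a = hμ.1.quotHom b) = μ :=
    funext₂ fun _ _ => propext hμ.1.quot_mk_eq_iff
  have hmax : IsMaxCon fun a b => hμ.1.quotHom a = hμ.1.quotHom b := by rwa [hker]
  exact hmax.isSimpleLat_of_surjective Quot.mk_surjective

theorem isSimpleLat_of_forall_lt [BoundedOrder L] [Nontrivial L]
    (h : ∀ θ : L → L → Prop, IsLatCon θ → ∀ a b, a < b → θ a b → θ ⊥ ⊤) : IsSimpleLat L := by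
  refine ⟨inferInstance, fun θ hθ => or_iff_not_imp_left.2 fun hne => ?_⟩
  obtain ⟨a, b, hθab, hab⟩ : ∃ a b, θ a b ∧ a ≠ b := by
    by_contra! hle
    exact hne (funext₂ fun a b => propext ⟨hle a b, fun hab => hab ▸ hθ.1.refl a⟩)
  exact hθ.eq_true_of_bot_top (h θ hθ _ _ (inf_lt_sup.2 hab) (hθ.inf_sup hθab))

end Congruence

section SimpleCardinality

/-- The map `x ↦ x ⊔ a` as an endomorphism of a distributive lattice. -/
def supRightLatticeHom {D : Type*} [DistribLattice D] (a : D) : LatticeHom D D where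
  toFun x := x ⊔ a
  map_sup' x y := sup_sup_distrib_right x y a
  map_inf' x y := sup_inf_right x y a

theorem IsSimpleLat.isBot_or_isTop {D : Type*} [DistribLattice D] (hD : IsSimpleLat D) (a : D) :
    IsBot a ∨ IsTop a := by
  refine (hD.2 _ (isLatCon_eq.comap (supRightLatticeHom a))).imp (fun h x => ?_) (fun h x => ?_)
  · have hinj : (a ⊓ x) ⊔ a = a ⊔ a → a ⊓ x = a := (congrFun₂ h (a ⊓ x) a).mp
    exact inf_eq_left.1 (hinj (by rw [sup_idem, sup_eq_right.2 inf_le_left]))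
  · have hconst : x ⊔ a = a ⊔ a := of_eq_true (congrFun₂ h x a)
    exact sup_eq_right.1 (hconst.trans (sup_idem a))

theorem mk_eq_two_of_forall_isBot_or_isTop {P : Type*} [PartialOrder P] [Nontrivial P]
    (h : ∀ a : P, IsBot a ∨ IsTop a) : #P = 2 := by
  obtain ⟨x, y, hxy⟩ := exists_pair_ne P
  refine (mk_eq_two_iff' x).2 ⟨y, hxy.symm, fun z hzx => ?_⟩
  have isBot_unique {a b : P} (ha : IsBot a) (hb : IsBot b) : a = b := (ha b).antisymm (hb a)
  have isTop_unique {a b : P} (ha : IsTop a) (hb : IsTop b) : a = b := (hb a).antisymm (ha b)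
  rcases h x with hx | hx
  · have isTop_of_ne {a : P} (ha : a ≠ x) : IsTop a :=
      (h a).resolve_left fun hbot => ha (isBot_unique hbot hx)
    exact isTop_unique (isTop_of_ne hzx) (isTop_of_ne hxy.symm)
  · have isBot_of_ne {a : P} (ha : a ≠ x) : IsBot a :=
      (h a).resolve_right fun htop => ha (isTop_unique htop hx)
    exact isBot_unique (isBot_of_ne hzx) (isBot_of_ne hxy.symm)

variable {L : Type*} [Lattice L]

theorem nodup_of_not_inf_sup_le {x y z : L} (h : ¬x ⊓ (y ⊔ z) ≤ x ⊓ y ⊔ x ⊓ z) :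
    [x, y, z, y ⊓ z, y ⊔ z].Nodup := by
  have hxy : ¬x ≤ y := fun hle => h <| by
    rw [inf_eq_left.2 hle]; exact inf_le_left.trans le_sup_left
  have hxz : ¬x ≤ z := fun hle => h <| by
    rw [inf_eq_left.2 hle]; exact inf_le_left.trans le_sup_right
  have hyz : ¬y ≤ z := fun hle => h <| by rw [sup_eq_right.2 hle]; exact le_sup_right
  have hzy : ¬z ≤ y := fun hle => h <| by rw [sup_eq_left.2 hle]; exact le_sup_left
  have hx_inf : x ≠ y ⊓ z := fun heq => hxy (heq.le.trans inf_le_left)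
  have hx_sup : x ≠ y ⊔ z := fun heq => h <| by
    rw [inf_eq_right.2 (heq ▸ le_sup_left : y ≤ x), inf_eq_right.2 (heq ▸ le_sup_right : z ≤ x)]
    exact inf_le_right
  simp [hx_inf, hx_sup, hyz, hzy, ne_of_not_le hxy, ne_of_not_le hxz, ne_of_not_le hyz]

theorem five_le_mk_of_not_inf_sup_le {x y z : L} (h : ¬x ⊓ (y ⊔ z) ≤ x ⊓ y ⊔ x ⊓ z) :
    5 ≤ #L :=
  card_le_of_finset ⟨_, Multiset.coe_nodup.2 (nodup_of_not_inf_sup_le h)⟩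

theorem IsSimpleLat.mk_eq_two_or_five_le (hL : IsSimpleLat L) : #L = 2 ∨ 5 ≤ #L := by
  by_cases hdistrib : ∀ x y z : L, x ⊓ (y ⊔ z) ≤ x ⊓ y ⊔ x ⊓ z
  · let _ : DistribLattice L := DistribLattice.ofInfSupLe hdistrib
    have := hL.1
    exact Or.inl (mk_eq_two_of_forall_isBot_or_isTop (IsSimpleLat.isBot_or_isTop hL))
  · push Not at hdistrib
    obtain ⟨x, y, z, hxyz⟩ := hdistrib
    exact Or.inr (five_le_mk_of_not_inf_sup_le hxyz)

end SimpleCardinality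

/-- The lattice `M_A` of height at most two: a least element, a greatest element, and between them
the elements of `A`, any two of which are complements. -/
inductive Diamond (A : Type*)
  | bot : Diamond A
  | top : Diamond A
  | atom (a : A) : Diamond A

namespace Diamond

variable {A : Type*}

open Classical in
noncomputable instance : Lattice (Diamond A) where
  le x y := x = bot ∨ y = top ∨ x = y
  le_refl x := Or.inr (Or.inr rfl)
  le_trans x y z := by grind
  le_antisymm x y := by grind
  sup x y := if x = bot then y else if y = bot then x else if x = y then x else top
  inf x y := if x = top then y else if y = top then x else if x = y then x else bot
  le_sup_left x y := by grind
  le_sup_right x y := by grind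
  sup_le x y z := by grind
  inf_le_left x y := by grind
  inf_le_right x y := by grind
  le_inf x y z := by grind

instance : BoundedOrder (Diamond A) where
  bot := bot
  bot_le _ := Or.inl rfl
  top := top
  le_top _ := Or.inr (Or.inl rfl)

instance : Nontrivial (Diamond A) :=
  ⟨bot, top, nofun⟩

theorem isCompl_atom {a b : A} (hab : a ≠ b) : IsCompl (atom a) (atom b) := by
  constructor
  · intro z (hza : z = bot ∨ _) (hzb : z = bot ∨ _)
    have hz : z = bot := by grind
    exact hz.le
  · intro z (haz : _ ∨ z = top ∨ _) (hbz : _ ∨ z = top ∨ _)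
    have hz : z = top := by grind
    exact hz.ge

theorem isSimpleLat (hA : ∀ a b : A, ∃ c, c ≠ a ∧ c ≠ b) : IsSimpleLat (Diamond A) := by
  refine isSimpleLat_of_forall_lt fun θ hθ x y hxy hθxy => ?_
  have of_bot_atom (a : A) (h : θ ⊥ (atom a)) : θ ⊥ ⊤ := by
    obtain ⟨b, hba, -⟩ := hA a a
    obtain ⟨c, hca, hcb⟩ := hA a b
    exact hθ.bot_top_of_isCompl (isCompl_atom hba.symm) (isCompl_atom hcb.symm)
      (isCompl_atom hca) h
  have of_atom_top (a : A) (h : θ (atom a) ⊤) : θ ⊥ ⊤ := by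
    obtain ⟨b, hba, -⟩ := hA a a
    exact of_bot_atom b (hθ.bot_of_top_of_isCompl (isCompl_atom hba.symm) h)
  rcases hxy.le with rfl | rfl | rfl
  · cases y with
    | bot => exact absurd hxy (lt_irrefl _)
    | top => exact hθxy
    | atom a => exact of_bot_atom a hθxy
  · cases x with
    | bot => exact hθxy
    | top => exact absurd hxy (lt_irrefl _)
    | atom a => exact of_atom_top a hθxy
  · exact absurd hxy (lt_irrefl _)

/-- The elements of `M_A`, with `none` as `⊥` and `some none` as `⊤`. -/
def equivOption (A : Type*) : Diamond A ≃ Option (Option A) where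
  toFun
    | bot => none
    | top => some none
    | atom a => some (some a)
  invFun
    | none => bot
    | some none => top
    | some (some a) => atom a
  left_inv x := by cases x <;> rfl
  right_inv x := by rcases x with _ | _ | a <;> rfl

theorem mk_eq (A : Type*) : #(Diamond A) = #A + 2 := by
  rw [mk_congr (equivOption A), mk_option, mk_option, add_assoc, one_add_one_eq_two]

end Diamond

theorem exists_isSimpleLat_mk_eq {κ : Cardinal.{u}} (hκ : κ = 2 ∨ 5 ≤ κ) :
    ∃ (L : Type u) (_ : Lattice L), IsSimpleLat L ∧ #L = κ := by
  rcases hκ with rfl | hκ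
  · exact ⟨Diamond PEmpty, inferInstance, Diamond.isSimpleLat nofun, by simp [Diamond.mk_eq]⟩
  · obtain ⟨c, rfl⟩ := exists_add_of_le hκ
    have hA : 3 ≤ #(3 + c).out := by simp
    refine ⟨Diamond (3 + c).out, inferInstance,
      Diamond.isSimpleLat (exists_ne_ne_of_three_le hA), ?_⟩
    rw [Diamond.mk_eq, mk_out, add_right_comm]
    norm_num

/-- There exist a lattice and a maximal congruence of it whose quotient
has cardinality κ iff κ = 2 or κ ≥ 5. -/
theorem exists_lattice_maxCon_card_iff (κ : Cardinal.{u}) :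
    (∃ (L : Type u) (inst : Lattice L) (μ : L → L → Prop),
        @IsMaxCon L inst μ ∧ Cardinal.mk (Quot μ) = κ) ↔ (κ = 2 ∨ 5 ≤ κ) := by
  constructor
  · rintro ⟨L, _, μ, hμ, rfl⟩
    let _ := hμ.1.quotLattice
    exact hμ.isSimpleLat_quot.mk_eq_two_or_five_le
  · intro hκ
    obtain ⟨L, _, hL, rfl⟩ := exists_isSimpleLat_mk_eq hκ
    exact ⟨L, _, _, hL.isMaxCon_eq, mk_congr Setoid.quotientBotEquiv⟩
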